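/- arXiv:2102.10224 — 5 statements merged into one kernel-verified Lean document; each statement's English description precedes it below -/
import Mathlib

section
/- Central-charge component of the fourth triality (Main Theorem, family (1O,1B,2D)): for all integers m ≥ n ≥ 0 with m + n ≥ 1 and every real psi with psi ≠ 0 and psi ≠ 1, one has c1O(n,m,psi) = c1B(n, m-n, 1/psi) and c1O(n,m,psi) = c2D(m+1, n, psi/(2*(psi-1))); here psi'' = psi/(2*(psi-1)) is the unique solution of 1/psi + 1/(2*psi'') = 1. -/
/-!
All three central charges are values of one function `trialityCharge a b l` which is symmetric in
`a` and `b` and homogeneous of degree `0`. Rescaling by `-psi` and swapping `a` and `b` carries the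
parameters of `c1B n (m - n) (1 / psi)` to those of `c1O n m psi`; rescaling by `psi - 1` does so
for `c2D (m + 1) n (psi / (2 * (psi - 1)))`.
-/

noncomputable def c1O (n m psi : ℝ) : ℝ :=
  -((-1 - m + n + psi + m * psi) * (-1 - 2 * m + 2 * n + 2 * m * psi) * (-2 * m + 2 * n + psi + 2 * m * psi)) / ((psi - 1) * psi)

noncomputable def c1B (n m psi : ℝ) : ℝ :=
  -((psi + m * psi - m - n - 1) * (2 * m * psi - 2 * m - 2 * n - 1) * (psi + 2 * m * psi - 2 * m - 2 * n)) / ((psi - 1) * psi)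

noncomputable def c2D (n m psi : ℝ) : ℝ :=
  -((-m + n + 2 * m * psi) * (-1 - m + n + psi + 2 * m * psi) * (-1 - 2 * m + 2 * n - 2 * psi + 4 * m * psi)) / (psi * (2 * psi - 1))

section TrialityCharge

variable {K : Type*} [Field K]

/-- The common form of the central charges of the cosets, as a function of homogeneous parameters:
`[a : b]` encodes the level and `l` the ranks. With `c = -(a + b)` it reads
`(l + c) * (2 * l - a) * (2 * l - b) / (a * b * c)`. -/
def trialityCharge (a b l : K) : K :=
  -((l - a - b) * (2 * l - a) * (2 * l - b)) / (a * b * (a + b))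

theorem trialityCharge_comm (a b l : K) : trialityCharge a b l = trialityCharge b a l := by
  unfold trialityCharge
  congr 1 <;> ring

theorem trialityCharge_mul_left {c : K} (hc : c ≠ 0) (a b l : K) :
    trialityCharge (c * a) (c * b) (c * l) = trialityCharge a b l := by
  unfold trialityCharge
  rw [← mul_div_mul_left (-((l - a - b) * (2 * l - a) * (2 * l - b))) _ (pow_ne_zero 3 hc)]
  congr 1 <;> ring

end TrialityCharge

theorem c1O_eq_trialityCharge (n m psi : ℝ) :
    c1O n m psi = trialityCharge 1 (-psi) (n + m * (psi - 1)) := by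
  unfold c1O trialityCharge
  congr 1 <;> ring

theorem c1B_eq_trialityCharge (n m psi : ℝ) :
    c1B n m psi = trialityCharge 1 (-psi) (m * (psi - 1) - n) := by
  unfold c1B trialityCharge
  congr 1 <;> ring

theorem c2D_eq_trialityCharge (n m psi : ℝ) :
    c2D n m psi = trialityCharge (2 * psi - 1) (-2 * psi) (m * (2 * psi - 1) + n - 1) := by
  unfold c2D trialityCharge
  rw [← mul_div_mul_left _ (psi * (2 * psi - 1)) (two_ne_zero (α := ℝ))]
  congr 1 <;> ring

theorem c1B_one_div_eq_c1O (n m : ℝ) {psi : ℝ} (hpsi0 : psi ≠ 0) :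
    c1B n (m - n) (1 / psi) = c1O n m psi := by
  have ha : -psi * 1 = -psi := mul_one _
  have hb : -psi * -(1 / psi) = 1 := by field_simp
  have hl : -psi * ((m - n) * (1 / psi - 1) - n) = n + m * (psi - 1) := by
    field_simp
    ring
  rw [c1B_eq_trialityCharge, ← trialityCharge_mul_left (neg_ne_zero.mpr hpsi0), ha, hb, hl,
    trialityCharge_comm, ← c1O_eq_trialityCharge]

theorem c2D_div_eq_c1O (n m : ℝ) {psi : ℝ} (hpsi1 : psi ≠ 1) :
    c2D (m + 1) n (psi / (2 * (psi - 1))) = c1O n m psi := by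
  have hd : psi - 1 ≠ 0 := sub_ne_zero.mpr hpsi1
  have ha : (psi - 1) * (2 * (psi / (2 * (psi - 1))) - 1) = 1 := by
    field_simp
    ring
  have hb : (psi - 1) * (-2 * (psi / (2 * (psi - 1)))) = -psi := by field_simp
  have hl : (psi - 1) * (n * (2 * (psi / (2 * (psi - 1))) - 1) + (m + 1) - 1) =
      n + m * (psi - 1) := by
    linear_combination n * ha
  rw [c2D_eq_trialityCharge, ← trialityCharge_mul_left hd, ha, hb, hl, ← c1O_eq_trialityCharge]

theorem stmt3_general (n m psi : ℝ) (hpsi0 : psi ≠ 0) (hpsi1 : psi ≠ 1) :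
    c1O n m psi = c1B n (m - n) (1 / psi) ∧
    c1O n m psi = c2D (m + 1) n (psi / (2 * (psi - 1))) :=
  ⟨(c1B_one_div_eq_c1O n m hpsi0).symm, (c2D_div_eq_c1O n m hpsi1).symm⟩

theorem stmt3 (n m : ℤ) (hn : 0 ≤ n) (hnm : n ≤ m) (hmn : 1 ≤ m + n)
    (psi : ℝ) (hpsi0 : psi ≠ 0) (hpsi1 : psi ≠ 1) :
    c1O (n : ℝ) (m : ℝ) psi = c1B (n : ℝ) ((m : ℝ) - (n : ℝ)) (1 / psi) ∧
    c1O (n : ℝ) (m : ℝ) psi = c2D ((m : ℝ) + 1) (n : ℝ) (psi / (2 * (psi - 1))) :=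
  stmt3_general n m psi hpsi0 hpsi1
end

section
/- Central-charge part of the coincidences C_{psi,1D}(n,m) ≅ W_s(sp_{2r}) (Appendix B, type 1D): for all integers m, n ≥ 0 and r ≥ 1, the identity c1D(n,m,psi) = csp(r,t) holds in each of the following six cases, whenever psi is not 0 or 1, t ≠ 0, and all displayed denominators are nonzero: (1) psi = (m+n+r)/m with m ≥ 1, t = (n+r)/(2*(m+n+r)); (2) psi = (2*m+2*n-1)/(2*m+2*r+1), t = (1-n+r)/(1+2*m+2*r); (3) psi = (1+2*m+2*n+2*r)/(2*(1+m)), t = (1+2*m+2*n+2*r)/(2*(2*r+2*n-1)); (4) psi = (1+2*m+2*n)/(2*(1+m+r)), t = (1+m+r)/(1-2*n+2*r); (5) psi = (2*m+2*n-2*r-1)/(2*m-2*r+1), t = (1-2*m-2*n+2*r)/(2*(2*r-2*m-1)); (6) psi = (m+n-r)/(m-r), t = (r-m)/(2*(r-m-n)) with r ≠ m and r ≠ m+n. -/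
/-!
Write `ψ = u / v` and put `ε = (-u, v, u - v)`, `x = (2 m + 1) u - 2 (m + n) v`. Then `∑ i, ε i = 0`
and `c1D n m ψ = (∏ i, (1 + x / ε i)) / 2`, which is invariant under permutations of `ε`. On the
line `x + ε i = 2 r ε j` one factor becomes `2 r ε j / ε i`, and the product is `csp r t` at
`t = -ε k / (2 ε i)`, where `{i, j, k} = {0, 1, 2}`. The six coincidences are the six choices of
`(i, j, k)`.
-/

noncomputable def c1D (n m psi : ℝ) : ℝ :=
  -((-m - n + m * psi) * (1 - 2 * m - 2 * n + psi + 2 * m * psi) * (-1 - 2 * m - 2 * n + 2 * psi + 2 * m * psi)) / ((psi - 1) * psi)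

noncomputable def csp (r t : ℝ) : ℝ :=
  -(r * ((2 * r + 1) * t - r - 1) * ((4 * r - 2) * t - 2 * r - 1)) / t

open Function

/-- The central charge `(1 + x / ε₀) (1 + x / ε₁) (1 + x / ε₂) / 2`, the common form of `c1D` and
`csp` that exhibits their symmetry in the parameters `ε`, which sum to zero in both cases. -/
def symmetricCharge {K : Type*} [Field K] (x : K) (ε : Fin 3 → K) : K :=
  (∏ i, (1 + x / ε i)) / 2

theorem symmetricCharge_comp {K : Type*} [Field K] (x : K) (ε : Fin 3 → K) {e : Fin 3 → Fin 3}
    (he : Injective e) : symmetricCharge x (ε ∘ e) = symmetricCharge x ε :=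
  congrArg (· / 2) <| (Finite.injective_iff_bijective.mp he).prod_comp fun i ↦ 1 + x / ε i

theorem csp_eq_symmetricCharge (r : ℝ) {ε : Fin 3 → ℝ} (hε : ∀ i, ε i ≠ 0) (hsum : ∑ i, ε i = 0) :
    csp r (-ε 2 / (2 * ε 0)) = symmetricCharge (2 * r * ε 1 - ε 0) ε := by
  have h₀ := hε 0
  have h₁ := hε 1
  have h₂ := hε 2
  have hε₁ : ε 1 = -ε 0 - ε 2 := by
    rw [Fin.sum_univ_three] at hsum
    linear_combination hsum
  rw [csp, symmetricCharge, Fin.prod_univ_three]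
  field_simp
  rw [hε₁]
  ring

/-- The three parameters of `symmetricCharge` for the coset `C^ψ_{1D}(n, m)` at `ψ = u / v`,
homogeneous in `(u, v)` so that no denominators appear. -/
def cosetParams (u v : ℝ) : Fin 3 → ℝ :=
  ![-u, v, u - v]

theorem cosetParams_ne_zero {u v : ℝ} (hu : u ≠ 0) (hv : v ≠ 0) (huv : u ≠ v) (i : Fin 3) :
    cosetParams u v i ≠ 0 := by
  fin_cases i
  · exact neg_ne_zero.mpr hu
  · exact hv
  · exact sub_ne_zero.mpr huv

theorem sum_cosetParams (u v : ℝ) : ∑ i, cosetParams u v i = 0 := by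
  simp [cosetParams, Fin.sum_univ_three]

theorem c1D_div_eq_symmetricCharge (n m : ℝ) {u v : ℝ} (hu : u ≠ 0) (hv : v ≠ 0) (huv : u ≠ v) :
    c1D n m (u / v) =
      symmetricCharge ((2 * m + 1) * u - 2 * (m + n) * v) (cosetParams u v) := by
  have huv' : u - v ≠ 0 := sub_ne_zero.mpr huv
  have hψ : u / v - 1 = (u - v) / v := by rw [sub_div, div_self hv]
  simp only [c1D, hψ, symmetricCharge, cosetParams, Fin.prod_univ_three, Matrix.cons_val]
  field_simp
  ring

theorem c1D_div_eq_csp_div (i j k : Fin 3) {n m r u v p q : ℝ}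
    (hψ₀ : u / v ≠ 0) (hψ₁ : u / v ≠ 1) (ht₀ : p / q ≠ 0) (hijk : Injective ![i, j, k])
    (hx : (2 * m + 1) * u - 2 * (m + n) * v + cosetParams u v i = 2 * r * cosetParams u v j)
    (ht : p * (2 * cosetParams u v i) = -cosetParams u v k * q) :
    c1D n m (u / v) = csp r (p / q) := by
  -- As `y / 0 = 0`, a nonzero quotient has a nonzero denominator.
  obtain ⟨hu, hv⟩ := div_ne_zero_iff.mp hψ₀
  obtain ⟨-, hq⟩ := div_ne_zero_iff.mp ht₀
  have huv : u ≠ v := fun h ↦ hψ₁ (h ▸ div_self (h ▸ hv))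
  have hε := cosetParams_ne_zero hu hv huv
  have hsum : ∑ l, (cosetParams u v ∘ ![i, j, k]) l = 0 :=
    ((Finite.injective_iff_bijective.mp hijk).sum_comp (cosetParams u v)).trans
      (sum_cosetParams u v)
  calc c1D n m (u / v)
      = symmetricCharge ((2 * m + 1) * u - 2 * (m + n) * v) (cosetParams u v) :=
        c1D_div_eq_symmetricCharge n m hu hv huv
    _ = symmetricCharge (2 * r * cosetParams u v j - cosetParams u v i)
          (cosetParams u v ∘ ![i, j, k]) := by
        rw [symmetricCharge_comp _ _ hijk, eq_sub_of_add_eq hx]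
    _ = csp r (-cosetParams u v k / (2 * cosetParams u v i)) :=
        (csp_eq_symmetricCharge r (fun l ↦ hε (![i, j, k] l)) hsum).symm
    _ = csp r (p / q) := by
        rw [(div_eq_div_iff hq (mul_ne_zero two_ne_zero (hε i))).mpr ht]

theorem stmt9_general {n m r ψ t : ℝ} (hψ₀ : ψ ≠ 0) (hψ₁ : ψ ≠ 1) (ht₀ : t ≠ 0)
    (h : (ψ = (m + n + r) / m ∧ t = (n + r) / (2 * (m + n + r))) ∨
      (ψ = (2 * m + 2 * n - 1) / (2 * m + 2 * r + 1) ∧ t = (1 - n + r) / (1 + 2 * m + 2 * r)) ∨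
      (ψ = (1 + 2 * m + 2 * n + 2 * r) / (2 * (1 + m)) ∧
        t = (1 + 2 * m + 2 * n + 2 * r) / (2 * (2 * r + 2 * n - 1))) ∨
      (ψ = (1 + 2 * m + 2 * n) / (2 * (1 + m + r)) ∧ t = (1 + m + r) / (1 - 2 * n + 2 * r)) ∨
      (ψ = (2 * m + 2 * n - 2 * r - 1) / (2 * m - 2 * r + 1) ∧
        t = (1 - 2 * m - 2 * n + 2 * r) / (2 * (2 * r - 2 * m - 1))) ∨
      (ψ = (m + n - r) / (m - r) ∧ t = (r - m) / (2 * (r - m - n)))) :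
    c1D n m ψ = csp r t := by
  rcases h with ⟨rfl, rfl⟩ | ⟨rfl, rfl⟩ | ⟨rfl, rfl⟩ | ⟨rfl, rfl⟩ | ⟨rfl, rfl⟩ | ⟨rfl, rfl⟩
  · apply c1D_div_eq_csp_div 0 1 2 hψ₀ hψ₁ ht₀ (by decide) <;>
      simp only [cosetParams, Matrix.cons_val] <;> ring
  · apply c1D_div_eq_csp_div 1 0 2 hψ₀ hψ₁ ht₀ (by decide) <;>
      simp only [cosetParams, Matrix.cons_val] <;> ring
  · apply c1D_div_eq_csp_div 2 1 0 hψ₀ hψ₁ ht₀ (by decide) <;>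
      simp only [cosetParams, Matrix.cons_val] <;> ring
  · apply c1D_div_eq_csp_div 2 0 1 hψ₀ hψ₁ ht₀ (by decide) <;>
      simp only [cosetParams, Matrix.cons_val] <;> ring
  · apply c1D_div_eq_csp_div 1 2 0 hψ₀ hψ₁ ht₀ (by decide) <;>
      simp only [cosetParams, Matrix.cons_val] <;> ring
  · apply c1D_div_eq_csp_div 0 2 1 hψ₀ hψ₁ ht₀ (by decide) <;>
      simp only [cosetParams, Matrix.cons_val] <;> ring

theorem stmt9 (n m r : ℤ) (hn : 0 ≤ n) (hm : 0 ≤ m) (hr : 1 ≤ r) :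
    (∀ psi t : ℝ,
      psi = ((m : ℝ) + (n : ℝ) + (r : ℝ)) / (m : ℝ) →
      t = ((n : ℝ) + (r : ℝ)) / (2 * ((m : ℝ) + (n : ℝ) + (r : ℝ))) →
      (m : ℝ) ≠ 0 →
      (2 * ((m : ℝ) + (n : ℝ) + (r : ℝ))) ≠ 0 →
      1 ≤ m →
      psi ≠ 0 →
      psi ≠ 1 →
      t ≠ 0 →
      c1D (n : ℝ) (m : ℝ) psi = csp (r : ℝ) t) ∧
    (∀ psi t : ℝ,
      psi = (2 * (m : ℝ) + 2 * (n : ℝ) - 1) / (2 * (m : ℝ) + 2 * (r : ℝ) + 1) →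
      t = (1 - (n : ℝ) + (r : ℝ)) / (1 + 2 * (m : ℝ) + 2 * (r : ℝ)) →
      (2 * (m : ℝ) + 2 * (r : ℝ) + 1) ≠ 0 →
      (1 + 2 * (m : ℝ) + 2 * (r : ℝ)) ≠ 0 →
      psi ≠ 0 →
      psi ≠ 1 →
      t ≠ 0 →
      c1D (n : ℝ) (m : ℝ) psi = csp (r : ℝ) t) ∧
    (∀ psi t : ℝ,
      psi = (1 + 2 * (m : ℝ) + 2 * (n : ℝ) + 2 * (r : ℝ)) / (2 * (1 + (m : ℝ))) →
      t = (1 + 2 * (m : ℝ) + 2 * (n : ℝ) + 2 * (r : ℝ)) / (2 * (2 * (r : ℝ) + 2 * (n : ℝ) - 1)) →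
      (2 * (1 + (m : ℝ))) ≠ 0 →
      (2 * (2 * (r : ℝ) + 2 * (n : ℝ) - 1)) ≠ 0 →
      psi ≠ 0 →
      psi ≠ 1 →
      t ≠ 0 →
      c1D (n : ℝ) (m : ℝ) psi = csp (r : ℝ) t) ∧
    (∀ psi t : ℝ,
      psi = (1 + 2 * (m : ℝ) + 2 * (n : ℝ)) / (2 * (1 + (m : ℝ) + (r : ℝ))) →
      t = (1 + (m : ℝ) + (r : ℝ)) / (1 - 2 * (n : ℝ) + 2 * (r : ℝ)) →
      (2 * (1 + (m : ℝ) + (r : ℝ))) ≠ 0 →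
      (1 - 2 * (n : ℝ) + 2 * (r : ℝ)) ≠ 0 →
      psi ≠ 0 →
      psi ≠ 1 →
      t ≠ 0 →
      c1D (n : ℝ) (m : ℝ) psi = csp (r : ℝ) t) ∧
    (∀ psi t : ℝ,
      psi = (2 * (m : ℝ) + 2 * (n : ℝ) - 2 * (r : ℝ) - 1) / (2 * (m : ℝ) - 2 * (r : ℝ) + 1) →
      t = (1 - 2 * (m : ℝ) - 2 * (n : ℝ) + 2 * (r : ℝ)) / (2 * (2 * (r : ℝ) - 2 * (m : ℝ) - 1)) →
      (2 * (m : ℝ) - 2 * (r : ℝ) + 1) ≠ 0 →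
      (2 * (2 * (r : ℝ) - 2 * (m : ℝ) - 1)) ≠ 0 →
      psi ≠ 0 →
      psi ≠ 1 →
      t ≠ 0 →
      c1D (n : ℝ) (m : ℝ) psi = csp (r : ℝ) t) ∧
    (∀ psi t : ℝ,
      psi = ((m : ℝ) + (n : ℝ) - (r : ℝ)) / ((m : ℝ) - (r : ℝ)) →
      t = ((r : ℝ) - (m : ℝ)) / (2 * ((r : ℝ) - (m : ℝ) - (n : ℝ))) →
      ((m : ℝ) - (r : ℝ)) ≠ 0 →
      (2 * ((r : ℝ) - (m : ℝ) - (n : ℝ))) ≠ 0 →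
      r ≠ m →
      r ≠ m + n →
      psi ≠ 0 →
      psi ≠ 1 →
      t ≠ 0 →
      c1D (n : ℝ) (m : ℝ) psi = csp (r : ℝ) t) := by
  refine ⟨?_, ?_, ?_, ?_, ?_, ?_⟩ <;> intros <;> apply stmt9_general <;> tauto
end

section
/- Central-charge part of the coincidences C_{psi,2C}(n,m) ≅ W_s(so_{2r})^{Z_2} (Appendix C, type 2C): for all integers m, n ≥ 0 and r ≥ 2, the identity c2C(n,m,psi) = cso(r,t) holds in each of the following three cases, whenever psi is not 0 or 1/2, t ≠ 0, and all displayed denominators are nonzero: (1) psi = (m+n+r)/(2*m) with m ≥ 1, t = (n+r)/(m+n+r); (2) psi = (1+2*m+2*n)/(2*(2*m+2*r-1)), t = 2*(r-n-1)/(2*m+2*r-1); (3) psi = (1+m+n-r)/(1+2*m-2*r), t = 2*(r-m-n-1)/(2*r-2*m-1). -/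
/-! Each of the three families makes one of the three linear factors in the numerator of `c2C` a
multiple of `r`: the first factor becomes `r`, the third `-4 * r * ψ`, the second
`r * (2 * ψ - 1)`, respectively. In terms of `ψ` the level is then `t = 1 - 1 / (2 * ψ)`,
`t = 1 - 2 * ψ`, `t = 2 * ψ`, and the two remaining factors of `c2C` are multiples of
`(2 * r - 2) * t - 2 * r + 1` and `(2 * r - 1) * t - 2 * r + 2`, the two factors of `cso`. -/

noncomputable def c2C (n m psi : ℝ) : ℝ :=
  -((-m - n + 2 * m * psi) * (-1 - m - n + psi + 2 * m * psi) * (-1 - 2 * m - 2 * n - 2 * psi + 4 * m * psi)) / (psi * (2 * psi - 1))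

noncomputable def cso (r t : ℝ) : ℝ :=
  -(r * ((2 * r - 2) * t - 2 * r + 1) * ((2 * r - 1) * t - 2 * r + 2)) / t

section CentralCharge

variable {n m r ψ t : ℝ}

theorem c2C_eq_cso_of_common_factor {c : ℝ} (hc : c ≠ 0)
    (hnum : (-m - n + 2 * m * ψ) * (-1 - m - n + ψ + 2 * m * ψ) *
        (-1 - 2 * m - 2 * n - 2 * ψ + 4 * m * ψ) =
      c * (r * ((2 * r - 2) * t - 2 * r + 1) * ((2 * r - 1) * t - 2 * r + 2)))
    (hden : ψ * (2 * ψ - 1) = c * t) :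
    c2C n m ψ = cso r t := by
  rw [c2C, cso, hnum, hden, ← mul_neg, mul_div_mul_left _ _ hc]

theorem c2C_eq_cso_one_sub_one_div_two_mul (hψ : ψ ≠ 0) (h : -m - n + 2 * m * ψ = r) :
    c2C n m ψ = cso r (1 - 1 / (2 * ψ)) := by
  generalize ht : 1 - 1 / (2 * ψ) = t
  have hψt : 2 * ψ * t = 2 * ψ - 1 := by rw [← ht]; field_simp
  have second_factor :
      -1 - m - n + ψ + 2 * m * ψ = -ψ * ((2 * r - 2) * t - 2 * r + 1) := by
    linear_combination h + (r - 1) * hψt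
  have third_factor :
      -1 - 2 * m - 2 * n - 2 * ψ + 4 * m * ψ = -(2 * ψ) * ((2 * r - 1) * t - 2 * r + 2) := by
    linear_combination 2 * h + (2 * r - 1) * hψt
  refine c2C_eq_cso_of_common_factor (c := 2 * ψ ^ 2) (by positivity) ?_ ?_
  · rw [h, second_factor, third_factor]
    ring
  · linear_combination -ψ * hψt

theorem c2C_eq_cso_one_sub_two_mul (hψ : ψ ≠ 0)
    (h : -1 - 2 * m - 2 * n - 2 * ψ + 4 * m * ψ = -4 * r * ψ) :
    c2C n m ψ = cso r (1 - 2 * ψ) := by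
  have first_factor :
      -m - n + 2 * m * ψ = ((2 * r - 1) * (1 - 2 * ψ) - 2 * r + 2) / 2 := by
    linear_combination h / 2
  have second_factor :
      -1 - m - n + ψ + 2 * m * ψ = ((2 * r - 2) * (1 - 2 * ψ) - 2 * r + 1) / 2 := by
    linear_combination h / 2
  refine c2C_eq_cso_of_common_factor (neg_ne_zero.mpr hψ) ?_ (by ring)
  rw [h, first_factor, second_factor]
  ring

theorem c2C_eq_cso_two_mul (hψ : 2 * ψ - 1 ≠ 0)
    (h : -1 - m - n + ψ + 2 * m * ψ = r * (2 * ψ - 1)) :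
    c2C n m ψ = cso r (2 * ψ) := by
  have first_factor :
      -m - n + 2 * m * ψ = ((2 * r - 1) * (2 * ψ) - 2 * r + 2) / 2 := by
    linear_combination h
  have third_factor :
      -1 - 2 * m - 2 * n - 2 * ψ + 4 * m * ψ = (2 * r - 2) * (2 * ψ) - 2 * r + 1 := by
    linear_combination 2 * h
  refine c2C_eq_cso_of_common_factor (div_ne_zero hψ two_ne_zero) ?_ (by ring)
  rw [h, first_factor, third_factor]
  ring

theorem stmt15_general (hψ₀ : ψ ≠ 0) (hψ₁ : ψ ≠ 1 / 2)
    (h : (m ≠ 0 ∧ ψ = (m + n + r) / (2 * m) ∧ t = (n + r) / (m + n + r)) ∨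
      (2 * m + 2 * r - 1 ≠ 0 ∧ ψ = (1 + 2 * m + 2 * n) / (2 * (2 * m + 2 * r - 1)) ∧
        t = (2 * (r - n - 1)) / (2 * m + 2 * r - 1)) ∨
      (1 + 2 * m - 2 * r ≠ 0 ∧ ψ = (1 + m + n - r) / (1 + 2 * m - 2 * r) ∧
        t = (2 * (r - m - n - 1)) / (2 * r - 2 * m - 1))) :
    c2C n m ψ = cso r t := by
  obtain ⟨hden, hψ, ht⟩ | ⟨hden, hψ, ht⟩ | ⟨hden, hψ, ht⟩ := h
  · have hnum : m + n + r ≠ 0 := fun h0 => hψ₀ (by rw [hψ, h0, zero_div])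
    have ht' : t = 1 - 1 / (2 * ψ) := by rw [ht, hψ]; field_simp; ring
    rw [ht']
    refine c2C_eq_cso_one_sub_one_div_two_mul hψ₀ ?_
    rw [hψ]
    field_simp
    ring
  · rw [eq_div_iff (mul_ne_zero two_ne_zero hden)] at hψ
    have ht' : t = 1 - 2 * ψ := by rw [ht, div_eq_iff hden]; linear_combination hψ
    rw [ht']
    exact c2C_eq_cso_one_sub_two_mul hψ₀ (by linear_combination hψ)
  · have ht' : t = 2 * ψ := by
      rw [ht, hψ, ← neg_div_neg_eq, ← mul_div_assoc]
      congr 1 <;> ring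
    rw [eq_div_iff hden] at hψ
    rw [ht']
    refine c2C_eq_cso_two_mul ?_ (by linear_combination hψ)
    exact fun h0 => hψ₁ (by linear_combination h0 / 2)

end CentralCharge

theorem stmt15 (n m r : ℤ) (hn : 0 ≤ n) (hm : 0 ≤ m) (hr : 2 ≤ r) :
    (∀ psi t : ℝ,
      psi = ((m : ℝ) + (n : ℝ) + (r : ℝ)) / (2 * (m : ℝ)) →
      t = ((n : ℝ) + (r : ℝ)) / ((m : ℝ) + (n : ℝ) + (r : ℝ)) →
      (2 * (m : ℝ)) ≠ 0 →
      ((m : ℝ) + (n : ℝ) + (r : ℝ)) ≠ 0 →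
      1 ≤ m →
      psi ≠ 0 →
      psi ≠ 1 / 2 →
      t ≠ 0 →
      c2C (n : ℝ) (m : ℝ) psi = cso (r : ℝ) t) ∧
    (∀ psi t : ℝ,
      psi = (1 + 2 * (m : ℝ) + 2 * (n : ℝ)) / (2 * (2 * (m : ℝ) + 2 * (r : ℝ) - 1)) →
      t = (2 * ((r : ℝ) - (n : ℝ) - 1)) / (2 * (m : ℝ) + 2 * (r : ℝ) - 1) →
      (2 * (2 * (m : ℝ) + 2 * (r : ℝ) - 1)) ≠ 0 →
      (2 * (m : ℝ) + 2 * (r : ℝ) - 1) ≠ 0 →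
      psi ≠ 0 →
      psi ≠ 1 / 2 →
      t ≠ 0 →
      c2C (n : ℝ) (m : ℝ) psi = cso (r : ℝ) t) ∧
    (∀ psi t : ℝ,
      psi = (1 + (m : ℝ) + (n : ℝ) - (r : ℝ)) / (1 + 2 * (m : ℝ) - 2 * (r : ℝ)) →
      t = (2 * ((r : ℝ) - (m : ℝ) - (n : ℝ) - 1)) / (2 * (r : ℝ) - 2 * (m : ℝ) - 1) →
      (1 + 2 * (m : ℝ) - 2 * (r : ℝ)) ≠ 0 →
      (2 * (r : ℝ) - 2 * (m : ℝ) - 1) ≠ 0 →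
      psi ≠ 0 →
      psi ≠ 1 / 2 →
      t ≠ 0 →
      c2C (n : ℝ) (m : ℝ) psi = cso (r : ℝ) t) :=
  ⟨fun _ _ hψ ht hden _ _ hψ₀ hψ₁ _ =>
      stmt15_general hψ₀ hψ₁ (.inl ⟨right_ne_zero_of_mul hden, hψ, ht⟩),
    fun _ _ hψ ht _ hden hψ₀ hψ₁ _ => stmt15_general hψ₀ hψ₁ (.inr (.inl ⟨hden, hψ, ht⟩)),
    fun _ _ hψ ht hden _ hψ₀ hψ₁ _ => stmt15_general hψ₀ hψ₁ (.inr (.inr ⟨hden, hψ, ht⟩))⟩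
end

section
/- Central-charge part of the coincidences C_{psi,2C}(n,m) ≅ W_s(osp_{1|2r})^{Z_2} (Appendix D, type 2C): for all integers m, n ≥ 0 and r ≥ 1, the identity c2C(n,m,psi) = cosp(r,t) holds in each of the following three cases, whenever psi is not 0 or 1/2, t is not 0 or 1/2, and all displayed denominators are nonzero: (1) psi = (1+2*m+2*n+2*r)/(4*m) with m ≥ 1, t = (1+2*n+2*r)/(2*(1+2*m+2*n+2*r)); (2) psi = (1+2*m+2*n)/(4*(m+r)), t = (m+r)/(2*r-2*n-1); (3) psi = (1+2*m+2*n-2*r)/(4*(m-r)), t = (r-m)/(2*r-2*m-2*n-1) with r ≠ m. -/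
noncomputable def cosp (r t : ℝ) : ℝ :=
  -(((2 * r - 1) * t - r) * (4 * r * t - 2 * r + 1) * ((4 * r + 2) * t - 2 * r - 1)) / (2 * t * (2 * t - 1))

/-!
On each of the three curves `psi = psi(n, m, r)` every factor of the numerator of `c2C n m psi`
becomes a polynomial in `psi` and `r` alone, and the central charge becomes `cosp r` at
`psi / (2 * psi - 1)`, `1 / 2 - psi` and `psi` respectively. The listed `t` is the image of that
level under the Feigin–Frenkel duality `t ↦ 1 / (4 * t)`, which preserves `cosp r`.
-/

lemma cosp_eq_div_two_mul {t : ℝ} (r : ℝ) (ht : t ≠ 1 / 2) :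
    cosp r t = -((2 * r + 1) * ((2 * r - 1) * t - r) * (4 * r * t - 2 * r + 1)) / (2 * t) := by
  have ht' : 2 * t - 1 ≠ 0 := fun h ↦ ht (by linarith)
  have last_factor : (4 * r + 2) * t - 2 * r - 1 = (2 * r + 1) * (2 * t - 1) := by ring
  rw [cosp, last_factor, ← mul_assoc, ← neg_mul, mul_div_mul_right _ _ ht']
  ring

lemma cosp_one_div_four_mul {t : ℝ} (r : ℝ) (ht : t ≠ 0) :
    cosp r (1 / (4 * t)) = cosp r t := by
  rcases eq_or_ne t (1 / 2) with rfl | ht_half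
  · norm_num
  · have dual_ne : 1 / (4 * t) ≠ 1 / 2 := by
      intro h
      field_simp at h
      exact ht_half (by linarith)
    rw [cosp_eq_div_two_mul r dual_ne, cosp_eq_div_two_mul r ht_half]
    field_simp
    ring

section TruncationCurves

variable {n m r psi : ℝ}

lemma c2C_eq_cosp_div_two_mul_sub_one (h : 4 * m * psi = 1 + 2 * m + 2 * n + 2 * r)
    (h₀ : psi ≠ 0) (h₁ : psi ≠ 1 / 2) :
    c2C n m psi = cosp r (psi / (2 * psi - 1)) := by
  have h₁' : 2 * psi - 1 ≠ 0 := fun h ↦ h₁ (by linarith)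
  have level_ne : psi / (2 * psi - 1) ≠ 1 / 2 := by
    intro h
    rw [div_eq_div_iff h₁' two_ne_zero] at h
    linarith
  have factor₁ : -m - n + 2 * m * psi = r + 1 / 2 := by linarith
  have factor₂ : -1 - m - n + psi + 2 * m * psi = psi + r - 1 / 2 := by linarith
  have factor₃ : -1 - 2 * m - 2 * n - 2 * psi + 4 * m * psi = 2 * r - 2 * psi := by linarith
  rw [c2C, factor₁, factor₂, factor₃, cosp_eq_div_two_mul r level_ne]
  field_simp
  ring

lemma c2C_eq_cosp_half_sub (h : 4 * (m + r) * psi = 1 + 2 * m + 2 * n)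
    (h₀ : psi ≠ 0) (h₁ : psi ≠ 1 / 2) :
    c2C n m psi = cosp r (1 / 2 - psi) := by
  have h₁' : 2 * psi - 1 ≠ 0 := fun h ↦ h₁ (by linarith)
  have level_ne : 1 / 2 - psi ≠ 1 / 2 := fun h ↦ h₀ (by linarith)
  have two_mul_level : 2 * (1 / 2 - psi) = -(2 * psi - 1) := by ring
  have factor₁ : -m - n + 2 * m * psi = 1 / 2 - 2 * r * psi := by linarith
  have factor₂ : -1 - m - n + psi + 2 * m * psi = psi - 1 / 2 - 2 * r * psi := by linarith
  have factor₃ : -1 - 2 * m - 2 * n - 2 * psi + 4 * m * psi = -((4 * r + 2) * psi) := by linarith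
  rw [c2C, factor₁, factor₂, factor₃, cosp_eq_div_two_mul r level_ne, two_mul_level]
  field_simp
  ring

lemma c2C_eq_cosp_self (h : 4 * (m - r) * psi = 1 + 2 * m + 2 * n - 2 * r)
    (h₀ : psi ≠ 0) (h₁ : psi ≠ 1 / 2) :
    c2C n m psi = cosp r psi := by
  have h₁' : 2 * psi - 1 ≠ 0 := fun h ↦ h₁ (by linarith)
  have factor₁ : -m - n + 2 * m * psi = (4 * r * psi - 2 * r + 1) / 2 := by linarith
  have factor₂ : -1 - m - n + psi + 2 * m * psi = (2 * r + 1) * (2 * psi - 1) / 2 := by linarith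
  have factor₃ : -1 - 2 * m - 2 * n - 2 * psi + 4 * m * psi = 2 * ((2 * r - 1) * psi - r) := by
    linarith
  rw [c2C, factor₁, factor₂, factor₃, cosp_eq_div_two_mul r h₁,
    div_eq_div_iff (mul_ne_zero h₀ h₁') (mul_ne_zero two_ne_zero h₀)]
  ring

end TruncationCurves

theorem stmt18_general (n m r psi : ℝ) (h₀ : psi ≠ 0) (h₁ : psi ≠ 1 / 2) :
    (m ≠ 0 → psi = (1 + 2 * m + 2 * n + 2 * r) / (4 * m) →
      c2C n m psi = cosp r ((1 + 2 * n + 2 * r) / (2 * (1 + 2 * m + 2 * n + 2 * r)))) ∧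
    (m + r ≠ 0 → psi = (1 + 2 * m + 2 * n) / (4 * (m + r)) →
      c2C n m psi = cosp r ((m + r) / (2 * r - 2 * n - 1))) ∧
    (m - r ≠ 0 → psi = (1 + 2 * m + 2 * n - 2 * r) / (4 * (m - r)) →
      c2C n m psi = cosp r ((r - m) / (2 * r - 2 * m - 2 * n - 1))) := by
  have h₁' : 2 * psi - 1 ≠ 0 := fun h ↦ h₁ (by linarith)
  refine ⟨fun hm hpsi ↦ ?_, fun hmr hpsi ↦ ?_, fun hmr hpsi ↦ ?_⟩ <;>
    rw [eq_div_iff (by positivity), mul_comm] at hpsi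
  · have num_eq : 1 + 2 * n + 2 * r = 2 * m * (2 * psi - 1) := by linarith
    rw [c2C_eq_cosp_div_two_mul_sub_one hpsi h₀ h₁,
      ← cosp_one_div_four_mul r (div_ne_zero h₀ h₁'), num_eq, ← hpsi]
    congr 1
    field_simp
  · have half_sub_ne : 1 / 2 - psi ≠ 0 := sub_ne_zero.mpr h₁.symm
    have den_eq : 2 * r - 2 * n - 1 = (m + r) * (4 * (1 / 2 - psi)) := by linarith
    rw [c2C_eq_cosp_half_sub hpsi h₀ h₁, ← cosp_one_div_four_mul r half_sub_ne, den_eq,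
      div_mul_cancel_left₀ hmr, one_div]
  · have den_eq : 2 * r - 2 * m - 2 * n - 1 = (r - m) * (4 * psi) := by linarith
    have hrm : r - m ≠ 0 := sub_ne_zero.mpr (sub_ne_zero.mp hmr).symm
    rw [c2C_eq_cosp_self hpsi h₀ h₁, ← cosp_one_div_four_mul r h₀, den_eq,
      div_mul_cancel_left₀ hrm, one_div]

theorem stmt18 (n m r : ℤ) (hn : 0 ≤ n) (hm : 0 ≤ m) (hr : 1 ≤ r) :
    (∀ psi t : ℝ,
      psi = (1 + 2 * (m : ℝ) + 2 * (n : ℝ) + 2 * (r : ℝ)) / (4 * (m : ℝ)) →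
      t = (1 + 2 * (n : ℝ) + 2 * (r : ℝ)) / (2 * (1 + 2 * (m : ℝ) + 2 * (n : ℝ) + 2 * (r : ℝ))) →
      (4 * (m : ℝ)) ≠ 0 →
      (2 * (1 + 2 * (m : ℝ) + 2 * (n : ℝ) + 2 * (r : ℝ))) ≠ 0 →
      1 ≤ m →
      psi ≠ 0 →
      psi ≠ 1 / 2 →
      t ≠ 0 →
      t ≠ 1 / 2 →
      c2C (n : ℝ) (m : ℝ) psi = cosp (r : ℝ) t) ∧
    (∀ psi t : ℝ,
      psi = (1 + 2 * (m : ℝ) + 2 * (n : ℝ)) / (4 * ((m : ℝ) + (r : ℝ))) →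
      t = ((m : ℝ) + (r : ℝ)) / (2 * (r : ℝ) - 2 * (n : ℝ) - 1) →
      (4 * ((m : ℝ) + (r : ℝ))) ≠ 0 →
      (2 * (r : ℝ) - 2 * (n : ℝ) - 1) ≠ 0 →
      psi ≠ 0 →
      psi ≠ 1 / 2 →
      t ≠ 0 →
      t ≠ 1 / 2 →
      c2C (n : ℝ) (m : ℝ) psi = cosp (r : ℝ) t) ∧
    (∀ psi t : ℝ,
      psi = (1 + 2 * (m : ℝ) + 2 * (n : ℝ) - 2 * (r : ℝ)) / (4 * ((m : ℝ) - (r : ℝ))) →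
      t = ((r : ℝ) - (m : ℝ)) / (2 * (r : ℝ) - 2 * (m : ℝ) - 2 * (n : ℝ) - 1) →
      (4 * ((m : ℝ) - (r : ℝ))) ≠ 0 →
      (2 * (r : ℝ) - 2 * (m : ℝ) - 2 * (n : ℝ) - 1) ≠ 0 →
      r ≠ m →
      psi ≠ 0 →
      psi ≠ 1 / 2 →
      t ≠ 0 →
      t ≠ 1 / 2 →
      c2C (n : ℝ) (m : ℝ) psi = cosp (r : ℝ) t) := by
  have general (psi : ℝ) := stmt18_general n m r psi
  exact ⟨fun psi t hpsi ht hb _ _ h₀ h₁ _ _ ↦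
      ht ▸ (general psi h₀ h₁).1 (right_ne_zero_of_mul hb) hpsi,
    fun psi t hpsi ht hb _ h₀ h₁ _ _ ↦
      ht ▸ (general psi h₀ h₁).2.1 (right_ne_zero_of_mul hb) hpsi,
    fun psi t hpsi ht hb _ _ h₀ h₁ _ _ ↦
      ht ▸ (general psi h₀ h₁).2.2 (right_ne_zero_of_mul hb) hpsi⟩
end

section
/- Central-charge part of the final Corollary of Appendix D (coincidences W_k(osp_{1|2m})^{Z_2} ≅ W_l(osp_{1|2n})^{Z_2}): for all integers m, n ≥ 1, the four values c2B(0, m, (m+n)/(2*m)), c2B(0, m, m/(2*(m+n))), c2B(0, n, (m+n)/(2*n)), and c2B(0, n, n/(2*(m+n))) are all equal, and their common value is -((1+2*m)*(1+2*n)*(2*m*n - m - n))/(2*(m+n)). -/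
noncomputable def c2B (n m psi : ℝ) : ℝ :=
  -((-m + n - psi + 2 * m * psi) * (1 - 2 * m + 2 * n + 4 * m * psi) * (-1 - 2 * m + 2 * n + 2 * psi + 4 * m * psi)) / (2 * psi * (2 * psi - 1))

/-! The specialization `c2B 0 m` is invariant under the Feigin–Frenkel duality `ψ ↦ 1 / (4 * ψ)`, which
exchanges the levels `(m + n) / (2 * m)` and `m / (2 * (m + n))`. At the first of these, each factor of
`c2B 0 m` simplifies, and the resulting value is symmetric in `m` and `n`. -/

/-- The central charge shared by the simple quotients of `W(osp_{1|2m})^{Z_2}` and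
`W(osp_{1|2n})^{Z_2}` at the levels where they coincide, for arbitrary real parameters `m` and `n`;
it takes the junk value `0` when `m + n = 0`. -/
noncomputable def coincidenceCentralCharge (m n : ℝ) : ℝ :=
  -((1 + 2 * m) * (1 + 2 * n) * (2 * m * n - m - n)) / (2 * (m + n))

lemma coincidenceCentralCharge_comm (m n : ℝ) :
    coincidenceCentralCharge m n = coincidenceCentralCharge n m := by
  unfold coincidenceCentralCharge
  ring

lemma c2B_neg_sub_one_div_four_mul (n m : ℝ) {ψ : ℝ} (hψ : ψ ≠ 0) :
    c2B (-n) (m - n) (1 / (4 * ψ)) = c2B n m ψ := by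
  -- The duality swaps the first two factors of the numerator and fixes the third, up to scalars.
  have first_factor : -(m - n) + -n - 1 / (4 * ψ) + 2 * (m - n) * (1 / (4 * ψ)) =
      -(1 - 2 * m + 2 * n + 4 * m * ψ) / (4 * ψ) := by
    field_simp
    ring
  have second_factor : 1 - 2 * (m - n) + 2 * -n + 4 * (m - n) * (1 / (4 * ψ)) =
      -(-m + n - ψ + 2 * m * ψ) / ψ := by
    field_simp
    ring
  have third_factor :
      -1 - 2 * (m - n) + 2 * -n + 2 * (1 / (4 * ψ)) + 4 * (m - n) * (1 / (4 * ψ)) =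
        -(-1 - 2 * m + 2 * n + 2 * ψ + 4 * m * ψ) / (2 * ψ) := by
    field_simp
    ring
  have denominator : 2 * (1 / (4 * ψ)) * (2 * (1 / (4 * ψ)) - 1) =
      -1 / (8 * ψ ^ 3) * (2 * ψ * (2 * ψ - 1)) := by
    field_simp
    ring
  have scalar_ne_zero : -1 / (8 * ψ ^ 3) ≠ 0 := by simp [hψ]
  unfold c2B
  rw [first_factor, second_factor, third_factor, denominator]
  -- Cancelling the common scalar, rather than clearing denominators, also covers `ψ = 1 / 2`.
  rw [← mul_div_mul_left _ (2 * ψ * (2 * ψ - 1)) scalar_ne_zero]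
  congr 1
  field_simp
  ring

lemma c2B_zero_one_div_four_mul (m : ℝ) {ψ : ℝ} (hψ : ψ ≠ 0) :
    c2B 0 m (1 / (4 * ψ)) = c2B 0 m ψ := by
  simpa only [neg_zero, sub_zero] using c2B_neg_sub_one_div_four_mul 0 m hψ

lemma c2B_zero_add_div_two_mul {m n : ℝ} (hm : m ≠ 0) (hn : n ≠ 0) (hmn : m + n ≠ 0) :
    c2B 0 m ((m + n) / (2 * m)) = coincidenceCentralCharge m n := by
  have first_factor : -m + 0 - (m + n) / (2 * m) + 2 * m * ((m + n) / (2 * m)) =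
      (2 * m * n - m - n) / (2 * m) := by
    field_simp
    ring
  have second_factor : 1 - 2 * m + 2 * 0 + 4 * m * ((m + n) / (2 * m)) = 1 + 2 * n := by
    field_simp
    ring
  have third_factor :
      -1 - 2 * m + 2 * 0 + 2 * ((m + n) / (2 * m)) + 4 * m * ((m + n) / (2 * m)) =
        n * (1 + 2 * m) / m := by
    field_simp
    ring
  have denominator : 2 * ((m + n) / (2 * m)) * (2 * ((m + n) / (2 * m)) - 1) =
      (m + n) * n / m ^ 2 := by
    field_simp
    ring
  unfold c2B coincidenceCentralCharge
  rw [first_factor, second_factor, third_factor, denominator]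
  field_simp

lemma c2B_zero_div_two_mul_add {m n : ℝ} (hm : m ≠ 0) (hn : n ≠ 0) (hmn : m + n ≠ 0) :
    c2B 0 m (m / (2 * (m + n))) = coincidenceCentralCharge m n := by
  have dual_level : m / (2 * (m + n)) = 1 / (4 * ((m + n) / (2 * m))) := by
    field_simp
    norm_num
  have level_ne_zero : (m + n) / (2 * m) ≠ 0 :=
    div_ne_zero hmn (mul_ne_zero two_ne_zero hm)
  rw [dual_level, c2B_zero_one_div_four_mul m level_ne_zero, c2B_zero_add_div_two_mul hm hn hmn]

theorem stmt19_general {m n : ℝ} (hm : m ≠ 0) (hn : n ≠ 0) (hmn : m + n ≠ 0) :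
    c2B 0 m ((m + n) / (2 * m)) = coincidenceCentralCharge m n ∧
    c2B 0 m (m / (2 * (m + n))) = coincidenceCentralCharge m n ∧
    c2B 0 n ((m + n) / (2 * n)) = coincidenceCentralCharge m n ∧
    c2B 0 n (n / (2 * (m + n))) = coincidenceCentralCharge m n := by
  have hnm : n + m ≠ 0 := by rwa [add_comm]
  refine ⟨c2B_zero_add_div_two_mul hm hn hmn, c2B_zero_div_two_mul_add hm hn hmn, ?_, ?_⟩
  · rw [add_comm m, coincidenceCentralCharge_comm, c2B_zero_add_div_two_mul hn hm hnm]
  · rw [add_comm m, coincidenceCentralCharge_comm, c2B_zero_div_two_mul_add hn hm hnm]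

theorem stmt19 (m n : ℤ) (hm : 1 ≤ m) (hn : 1 ≤ n) :
    c2B 0 (m : ℝ) (((m : ℝ) + (n : ℝ)) / (2 * (m : ℝ))) = -((1 + 2 * (m : ℝ)) * (1 + 2 * (n : ℝ)) * (2 * (m : ℝ) * (n : ℝ) - (m : ℝ) - (n : ℝ))) / (2 * ((m : ℝ) + (n : ℝ))) ∧
    c2B 0 (m : ℝ) ((m : ℝ) / (2 * ((m : ℝ) + (n : ℝ)))) = -((1 + 2 * (m : ℝ)) * (1 + 2 * (n : ℝ)) * (2 * (m : ℝ) * (n : ℝ) - (m : ℝ) - (n : ℝ))) / (2 * ((m : ℝ) + (n : ℝ))) ∧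
    c2B 0 (n : ℝ) (((m : ℝ) + (n : ℝ)) / (2 * (n : ℝ))) = -((1 + 2 * (m : ℝ)) * (1 + 2 * (n : ℝ)) * (2 * (m : ℝ) * (n : ℝ) - (m : ℝ) - (n : ℝ))) / (2 * ((m : ℝ) + (n : ℝ))) ∧
    c2B 0 (n : ℝ) ((n : ℝ) / (2 * ((m : ℝ) + (n : ℝ)))) = -((1 + 2 * (m : ℝ)) * (1 + 2 * (n : ℝ)) * (2 * (m : ℝ) * (n : ℝ) - (m : ℝ) - (n : ℝ))) / (2 * ((m : ℝ) + (n : ℝ))) := by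
  exact stmt19_general (by norm_cast; lia) (by norm_cast; lia) (by norm_cast; lia)
end
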